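/- Let m ∈ ℕ with m ≥ 1, let p be a minimal idempotent ultrafilter on ℕ, let A ∈ ⊗_{i=1}^m p, and let T ∈ 𝒫_f(ℙ). Then there exist functions α : 𝒫_f(ℕ^ℕ) → ℕ and H : 𝒫_f(ℕ^ℕ) → 𝒫_f(ℕ) such that (1) whenever G, K ∈ 𝒫_f(ℕ^ℕ) and G ⊊ K one has max H(G) < min H(K), and (2) whenever n ≥ m, G₁ ⊊ G₂ ⊊ ⋯ ⊊ G_n in 𝒫_f(ℕ^ℕ), f_i ∈ G_i for each i ∈ {1,…,n}, β₁ < β₂ < ⋯ < β_m are nonempty subsets of {1,…,n}, and P₁,…,P_m ∈ T, the tuple (Σ_{i∈β₁}α(G_i) + P₁(Σ_{i∈β₁}Σ_{t∈H(G_i)}f_i(t)), …, Σ_{i∈β_m}α(G_i) + P_m(Σ_{i∈β_m}Σ_{t∈H(G_i)}f_i(t))) belongs to A. -/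

import Mathlib

namespace MultiCST

/-- The sum `p + q` of ultrafilters on ℕ: `A ∈ p + q` iff `{x : {y : x+y ∈ A} ∈ q} ∈ p`. -/
def uAdd (p q : Ultrafilter ℕ) : Ultrafilter ℕ :=
  p.bind fun x => q.map fun y => x + y

/-- `A ⊆ ℕ` is a J-set. -/
def IsJSet (A : Set ℕ) : Prop :=
  ∀ F : Finset (ℕ → ℕ), F.Nonempty →
    ∃ (a : ℕ) (β : Finset ℕ), β.Nonempty ∧ ∀ f ∈ F, a + ∑ t ∈ β, f t ∈ A

/-- `p ∈ 𝒥`: every member of `p` is a J-set. -/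
def MemJ (p : Ultrafilter ℕ) : Prop := ∀ A : Set ℕ, A ∈ p → IsJSet A

/-- `p` is an idempotent ultrafilter. -/
def IdempotentUF (p : Ultrafilter ℕ) : Prop := uAdd p p = p

/-- `p` is a minimal idempotent ultrafilter. -/
def IsMinimalIdempotent (p : Ultrafilter ℕ) : Prop :=
  IdempotentUF p ∧
    ∀ q : Ultrafilter ℕ, IdempotentUF q → uAdd q p = q → uAdd p q = q → q = p

/-- Tensor product `⊗_{i=1}^m p_i` of ultrafilters on ℕ, as an ultrafilter on `Fin m → ℕ`. -/
def tensor : ∀ m : ℕ, (Fin m → Ultrafilter ℕ) → Ultrafilter (Fin m → ℕ)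
  | 0, _ => pure fun i => i.elim0
  | m + 1, p =>
      (p 0).bind fun x => (tensor m fun i => p i.succ).map fun v => Fin.cons x v

/-- `f : ℕ → ℕ` is (given by) a polynomial with coefficients in ℕ and zero constant term. -/
def IsPolyZeroConst (f : ℕ → ℕ) : Prop :=
  ∃ P : Polynomial ℕ, P.coeff 0 = 0 ∧ ∀ x, f x = P.eval x

/-- The linear combination `a₁·p₁ + a₂·p₂ + ⋯ + a_m·p_m` of ultrafilters on ℕ. -/
def linComb : ∀ m : ℕ, (Fin m → ℕ) → (Fin m → Ultrafilter ℕ) → Ultrafilter ℕ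
  | 0, _, _ => pure 0
  | m + 1, a, p =>
      uAdd ((p 0).map fun x => a 0 * x)
        (linComb m (fun i => a i.succ) fun i => p i.succ)

/-- Abstract polynomial maps of degree `≤ d` vanishing at `0`. -/
def IsPolyMap {M : Type} [AddCommGroup M] : ℕ → (M → ℤ) → Prop
  | 0, Q => Q = 0
  | d + 1, Q => Q 0 = 0 ∧ ∀ h, IsPolyMap d (fun x => Q (x + h) - Q x - Q h)

section PolyMap
variable {M : Type} [AddCommGroup M]

lemma IsPolyMap.zero (d : ℕ) : IsPolyMap d (0 : M → ℤ) := by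
  induction d with
  | zero => rfl
  | succ d ih => exact ⟨rfl, fun h => by simpa using! ih⟩

lemma IsPolyMap.at_zero {d : ℕ} {Q : M → ℤ} (hQ : IsPolyMap d Q) : Q 0 = 0 := by
  cases d with
  | zero => rw [show Q = 0 from hQ]; rfl
  | succ d => exact hQ.1

lemma IsPolyMap.add {d : ℕ} : ∀ {Q R : M → ℤ}, IsPolyMap d Q → IsPolyMap d R →
    IsPolyMap d (fun x => Q x + R x) := by
  induction d with
  | zero =>
    intro Q R hQ hR
    rw [show Q = 0 from hQ, show R = 0 from hR]; funext x; simp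
  | succ d ih =>
    intro Q R hQ hR
    refine ⟨by simp [hQ.1, hR.1], fun h => ?_⟩
    have := ih (hQ.2 h) (hR.2 h)
    convert this using 2
    ring

lemma IsPolyMap.smul {d : ℕ} (k : ℤ) : ∀ {Q : M → ℤ}, IsPolyMap d Q →
    IsPolyMap d (fun x => k * Q x) := by
  induction d with
  | zero =>
    intro Q hQ
    rw [show Q = 0 from hQ]; funext x; simp
  | succ d ih =>
    intro Q hQ
    refine ⟨by simp [hQ.1], fun h => ?_⟩
    have := ih (hQ.2 h)
    convert this using 2
    ring

lemma IsPolyMap.sub {d : ℕ} {Q R : M → ℤ} (hQ : IsPolyMap d Q) (hR : IsPolyMap d R) :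
    IsPolyMap d (fun x => Q x - R x) := by
  have := hQ.add (hR.smul (-1))
  convert this using 2
  ring

lemma IsPolyMap.succ {d : ℕ} : ∀ {Q : M → ℤ}, IsPolyMap d Q → IsPolyMap (d + 1) Q := by
  induction d with
  | zero =>
    intro Q hQ
    rw [show Q = 0 from hQ]; exact IsPolyMap.zero 1
  | succ d ih =>
    intro Q hQ
    exact ⟨hQ.1, fun h => ih (hQ.2 h)⟩

lemma IsPolyMap.mono {d e : ℕ} (h : d ≤ e) {Q : M → ℤ} (hQ : IsPolyMap d Q) :
    IsPolyMap e Q := by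
  induction h with
  | refl => exact hQ
  | step _ ih => exact ih.succ

lemma IsPolyMap.hom (φ : M →+ ℤ) : IsPolyMap 1 (fun x => φ x) := by
  refine ⟨by simp, fun h => ?_⟩
  funext x
  simp

lemma IsPolyMap.hom_mul (φ : M →+ ℤ) {d : ℕ} : ∀ {Q : M → ℤ}, IsPolyMap d Q →
    IsPolyMap (d + 1) (fun x => φ x * Q x) := by
  induction d with
  | zero =>
    intro Q hQ
    rw [show Q = 0 from hQ]; simpa using! IsPolyMap.zero (M := M) 1
  | succ d ih =>
    intro Q hQ
    refine ⟨by simp, fun h => ?_⟩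
    have h1 := ih (hQ.2 h)
    have h2 := ((IsPolyMap.hom φ).mono (Nat.le_add_left 1 d)).smul (Q h)
    have h3 := hQ.smul (φ h)
    have h4 := (hQ.2 h).succ.smul (φ h)
    convert ((h1.add h2).add h3).add h4 using 2
    simp only [map_add]
    ring

lemma IsPolyMap.pow (φ : M →+ ℤ) (n : ℕ) : IsPolyMap (n + 1) (fun x => φ x ^ (n + 1)) := by
  induction n with
  | zero => simpa using IsPolyMap.hom φ
  | succ n ih =>
    convert IsPolyMap.hom_mul φ ih using 2
    ring

lemma IsPolyMap.sum {ι : Type} {d : ℕ} (s : Finset ι) (Q : ι → M → ℤ)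
    (h : ∀ i ∈ s, IsPolyMap d (Q i)) : IsPolyMap d (fun x => ∑ i ∈ s, Q i x) := by
  classical
  induction s using Finset.induction_on with
  | empty => simpa using! IsPolyMap.zero (M := M) d
  | insert a s ha ih =>
    simp only [Finset.sum_insert ha]
    exact (h a (by simp)).add (ih fun i hi => h i (by simp [hi]))

lemma IsPolyMap.eval (φ : M →+ ℤ) (P : Polynomial ℕ) (hP : P.coeff 0 = 0) :
    ∃ d, IsPolyMap d (fun x => (P.map (Nat.castRingHom ℤ)).eval (φ x)) := by
  refine ⟨P.natDegree + 1, ?_⟩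
  have key : ∀ x : M, (P.map (Nat.castRingHom ℤ)).eval (φ x)
      = ∑ i ∈ Finset.range (P.natDegree + 1), (P.coeff i : ℤ) * φ x ^ i := by
    intro x
    rw [Polynomial.eval_map, Polynomial.eval₂_eq_sum_range]
    simp
  simp only [key]
  apply IsPolyMap.sum
  intro i hi
  rw [Finset.mem_range] at hi
  cases i with
  | zero => simpa [hP] using! IsPolyMap.zero (M := M) _
  | succ i => exact ((IsPolyMap.pow φ i).mono (by omega)).smul _

end PolyMap

/-- Uniformly recurrent colouring. -/
def UnifRec {κ : Type} (c : ℤ → κ) : Prop :=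
  ∀ (Z : Finset ℤ) (a : ℤ), ∃ E : Finset ℤ, ∀ x, ∃ e ∈ E, ∀ z ∈ Z, c (x + e + z) = c (a + z)

lemma exists_unifRec {κ : Type} [Finite κ] (c : ℤ → κ) :
    ∃ d : ℤ → κ, UnifRec d ∧ ∀ Z : Finset ℤ, ∃ n, ∀ z ∈ Z, c (n + z) = d z := by
  let : TopologicalSpace κ := ⊥
  have : DiscreteTopology κ := ⟨rfl⟩
  let sh : ℤ → (ℤ → κ) → (ℤ → κ) := fun e d z => d (e + z)
  have hsh : ∀ e, Continuous (sh e) := fun e => continuous_pi fun z => continuous_apply _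
  have hsh2 : ∀ e e' d, sh e (sh e' d) = sh (e' + e) d := by
    intro e e' d; funext z; simp [sh, add_assoc]
  have hcyl : ∀ (Z : Finset ℤ) (d : ℤ → κ), IsOpen {d' : ℤ → κ | ∀ z ∈ Z, d' z = d z} := by
    intro Z d
    have : {d' : ℤ → κ | ∀ z ∈ Z, d' z = d z} = ⋂ z ∈ Z, (fun d' : ℤ → κ => d' z) ⁻¹' {d z} := by
      ext d'; simp
    rw [this]
    exact isOpen_biInter_finset fun z _ => (isOpen_discrete _).preimage (continuous_apply z)
  let S : Set (Set (ℤ → κ)) := {Y | IsClosed Y ∧ Y.Nonempty ∧ ∀ e, ∀ d ∈ Y, sh e d ∈ Y}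
  let X0 : Set (ℤ → κ) := closure (Set.range fun e => sh e c)
  have hX0 : X0 ∈ S := by
    refine ⟨isClosed_closure, ⟨sh 0 c, subset_closure ⟨0, rfl⟩⟩, fun e d hd => ?_⟩
    refine map_mem_closure (hsh e) hd ?_
    rintro _ ⟨e', rfl⟩
    exact ⟨e' + e, (hsh2 _ _ _).symm⟩
  obtain ⟨Y, hYX, hY⟩ := zorn_superset_nonempty S (by
    intro C hCS hC hne
    refine ⟨⋂₀ C, ⟨isClosed_sInter fun t ht => (hCS ht).1, ?_, fun e d hd => ?_⟩,
      fun s hs => Set.sInter_subset_of_mem hs⟩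
    · rw [Set.sInter_eq_iInter]
      have := hne.coe_sort
      exact IsCompact.nonempty_iInter_of_directed_nonempty_isCompact_isClosed
        ((↑) : C → Set (ℤ → κ)) (DirectedOn.directed_val (IsChain.directedOn hC.symm))
        (fun i => (hCS i.prop).2.1) (fun i => (hCS i.prop).1.isCompact) (fun i => (hCS i.prop).1)
    · rw [Set.mem_sInter] at hd ⊢
      exact fun t ht => (hCS ht).2.2 e d (hd t ht)) X0 hX0
  obtain ⟨hYc, ⟨d, hd⟩, hYi⟩ := hY.prop
  refine ⟨d, ?_, ?_⟩
  · intro Z a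
    let U : Set (ℤ → κ) := {d' | ∀ z ∈ Z, d' z = sh a d z}
    have hU : IsOpen U := hcyl Z (sh a d)
    have hcov : Y ⊆ ⋃ e, sh e ⁻¹' U := by
      by_contra hcon
      obtain ⟨d1, hd1, hd1'⟩ := Set.not_subset.1 hcon
      have hY' : (Y ∩ ⋂ e, (sh e ⁻¹' U)ᶜ) ∈ S := by
        refine ⟨hYc.inter (isClosed_iInter fun e => (hU.preimage (hsh e)).isClosed_compl),
          ⟨d1, hd1, by simpa using hd1'⟩, ?_⟩
        rintro e d2 ⟨h1, h2⟩
        refine ⟨hYi e d2 h1, ?_⟩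
        simp only [Set.mem_iInter, Set.mem_compl_iff, Set.mem_preimage, hsh2] at h2 ⊢
        exact fun i => h2 _
      have := hY.le_of_le hY' Set.inter_subset_left hd
      have h3 := this.2
      simp only [Set.mem_iInter, Set.mem_compl_iff, Set.mem_preimage] at h3
      exact h3 a (fun z _ => rfl)
    obtain ⟨E, hE⟩ := hYc.isCompact.elim_finite_subcover _ (fun e => hU.preimage (hsh e)) hcov
    refine ⟨E, fun x => ?_⟩
    have := hE (hYi x d hd)
    simp only [Set.mem_iUnion, Set.mem_preimage, hsh2] at this
    obtain ⟨e, he, h⟩ := this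
    exact ⟨e, he, fun z hz => h z hz⟩
  · intro Z
    obtain ⟨d', h1, ⟨n, rfl⟩⟩ := mem_closure_iff.1 (hYX hd) _ (hcyl Z d) (fun z _ => rfl)
    exact ⟨n, h1⟩

/-- Monochromatic configurations exist for the family `V` along the IP set of `x`. -/
def MonoFam {M : Type} [AddCommGroup M] (x : ℕ → M) (V : Set (M → ℤ)) : Prop :=
  ∀ (κ : Type) [Finite κ] (c : ℤ → κ) (N : ℕ), ∃ (a : ℤ) (β : Finset ℕ) (k : κ), β.Nonempty ∧
    (∀ t ∈ β, N ≤ t) ∧ ∀ v ∈ V, c (a + v (∑ t ∈ β, x t)) = k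

section PET
variable {M : Type} [AddCommGroup M]

/-- In a syndetic pattern set, configurations exist. -/
lemma MonoFam.unifRec {x : ℕ → M} {V : Set (M → ℤ)} (hV : MonoFam x V) {κ : Type}
    {c : ℤ → κ} (hc : UnifRec c) (Z : Finset ℤ) (a : ℤ) (N : ℕ) :
    ∃ (b : ℤ) (β : Finset ℕ), β.Nonempty ∧ (∀ t ∈ β, N ≤ t) ∧
      ∀ v ∈ V, ∀ z ∈ Z, c (b + v (∑ t ∈ β, x t) + z) = c (a + z) := by
  obtain ⟨E, hE⟩ := hc Z a
  choose e heE he using hE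
  obtain ⟨b, β, k, h1, h2, h3⟩ := hV E (fun y => ⟨e y, heE y⟩) N
  refine ⟨b + k, β, h1, h2, fun v hv z hz => ?_⟩
  have h4 : e (b + v (∑ t ∈ β, x t)) = k := congrArg Subtype.val (h3 v hv)
  rw [← he (b + v (∑ t ∈ β, x t)) z hz, h4]
  congr 1
  ring

lemma MonoFam.of_unifRec {x : ℕ → M} {V : Set (M → ℤ)} (hfin : V.Finite)
    (h : ∀ (κ : Type) [Finite κ] (c : ℤ → κ), UnifRec c → ∀ N : ℕ,
      ∃ (a : ℤ) (β : Finset ℕ) (k : κ), β.Nonempty ∧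
        (∀ t ∈ β, N ≤ t) ∧ ∀ v ∈ V, c (a + v (∑ t ∈ β, x t)) = k) : MonoFam x V := by
  intro κ _ c N
  obtain ⟨d, hd, hcd⟩ := exists_unifRec c
  obtain ⟨a, β, k, h1, h2, h3⟩ := h κ d hd N
  obtain ⟨n, hn⟩ := hcd (hfin.image fun v => a + v (∑ t ∈ β, x t)).toFinset
  refine ⟨n + a, β, k, h1, h2, fun v hv => ?_⟩
  rw [add_assoc, hn _ (by simpa using ⟨v, hv, rfl⟩), h3 v hv]

/-- The colour focusing step. -/
lemma focus_step {x : ℕ → M} {V : Set (M → ℤ)} (hfin : V.Finite) (h0 : ∀ v ∈ V, v 0 = 0)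
    (w : M → ℤ)
    (hV : ∀ Γ : Set M, Γ.Finite → MonoFam x
      {q | ∃ v ∈ V, v ≠ 0 ∧ ∃ h ∈ Γ, q = fun y => v (y + h) - v h - w y}) :
    MonoFam x V := by
  classical
  refine MonoFam.of_unifRec hfin ?_
  intro κ _ c hc N
  by_contra hcon
  have stage : ∀ n : ℕ, ∃ K : Finset κ, K.card = n ∧ ∃ (a : ℤ) (B : κ → Finset ℕ), ∀ k ∈ K,
      (B k).Nonempty ∧ (∀ t ∈ B k, N ≤ t) ∧
        ∀ v ∈ V, v ≠ 0 → c (a + v (∑ t ∈ B k, x t)) = k := by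
    intro n
    induction n with
    | zero => exact ⟨∅, rfl, 0, fun _ => ∅, by simp⟩
    | succ n ih =>
      obtain ⟨K, hK, a, B, hB⟩ := ih
      have haK : c a ∉ K := by
        intro haK
        obtain ⟨h1, h2, h3⟩ := hB _ haK
        refine hcon ⟨a, B (c a), c a, h1, h2, fun v hv => ?_⟩
        by_cases hv0 : v = 0
        · simp [hv0]
        · exact h3 v hv hv0
      let B' : κ → Finset ℕ := fun k => if k ∈ K then B k else ∅
      let K' := insert (c a) K
      let Γ : Set M := (fun k => ∑ t ∈ B' k, x t) '' (K' : Set κ)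
      have hΓ : Γ.Finite := (Finset.finite_toSet K').image _
      let Z : Finset ℤ := ((hfin.prod hΓ).image fun q => q.1 q.2).toFinset
      let N' := (K'.biUnion B').sup id + N + 1
      obtain ⟨b, β, hβ1, hβ2, hβ3⟩ := (hV Γ hΓ).unifRec hc Z a N'
      refine ⟨K', by simp [K', haK, hK], b - w (∑ t ∈ β, x t), fun k => B' k ∪ β, ?_⟩
      intro k hk
      have hlt : ∀ t ∈ B' k, ∀ s ∈ β, t < s := by
        intro t ht s hs
        have h1 : t ≤ (K'.biUnion B').sup id :=
          Finset.le_sup (f := id) (Finset.mem_biUnion.2 ⟨k, hk, ht⟩)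
        have h2 := hβ2 s hs
        omega
      have hdisj : Disjoint (B' k) β := by
        rw [Finset.disjoint_left]
        intro t ht hs
        exact lt_irrefl _ (hlt t ht t hs)
      refine ⟨hβ1.mono Finset.subset_union_right, ?_, ?_⟩
      · intro t ht
        rcases Finset.mem_union.1 ht with ht | ht
        · by_cases hkK : k ∈ K
          · simp only [B', hkK, if_true] at ht
            exact (hB k hkK).2.1 t ht
          · simp [B', hkK] at ht
        · have := hβ2 t ht
          omega
      · intro v hv hv0
        rw [Finset.sum_union hdisj]
        set h := ∑ t ∈ B' k, x t with hh
        have hhΓ : h ∈ Γ := ⟨k, hk, rfl⟩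
        have := hβ3 _ ⟨v, hv, hv0, h, hhΓ, rfl⟩ (v h) (by
          simp only [Z, Set.Finite.mem_toFinset]
          exact ⟨(v, h), ⟨hv, hhΓ⟩, rfl⟩)
        have e1 : b - w (∑ t ∈ β, x t) + v (h + ∑ t ∈ β, x t)
          = b + (v ((∑ t ∈ β, x t) + h) - v h - w (∑ t ∈ β, x t)) + v h := by
          rw [add_comm h]; ring
        rw [e1, this]
        by_cases hkK : k ∈ K
        · have h5 := (hB k hkK).2.2 v hv hv0
          simpa [hh, B', hkK] using h5
        · have h6 : k = c a := by simpa [K', hkK] using hk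
          simp [hh, B', haK, h0 v hv, h6]
  obtain ⟨K, hK, -⟩ := stage (Nat.card κ + 1)
  have := Fintype.ofFinite κ
  have := Finset.card_le_univ K
  rw [Nat.card_eq_fintype_card] at hK
  omega

/-- PET induction. -/
lemma monoFam_of_cover (x : ℕ → M) (W : Multiset ℕ) : ∀ (L : Multiset (ℕ × (M → ℤ))),
    L.map Prod.fst = W → (∀ r ∈ L, IsPolyMap (r.1 + 1) r.2) →
    ∀ V : Set (M → ℤ), V.Finite →
      (∀ v ∈ V, v = 0 ∨ ∃ r ∈ L, IsPolyMap r.1 (fun y => v y - r.2 y)) → MonoFam x V := by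
  classical
  induction W using (WellFounded.cutExpand (wellFounded_lt (α := ℕ))).induction with
  | _ W ih =>
  intro L hLW hL V hfin hcov
  rcases L.empty_or_exists_mem with rfl | hne
  · intro κ _ c N
    refine ⟨0, {N}, c 0, by simp, by simp, fun v hv => ?_⟩
    rcases hcov v hv with rfl | ⟨r, hr, -⟩
    · simp
    · simp at hr
  · obtain ⟨⟨d, w⟩, hw, hmin⟩ : ∃ r ∈ L, ∀ r' ∈ L, r.1 ≤ r'.1 := by
      obtain ⟨r, hr, h⟩ := Finset.exists_min_image L.toFinset Prod.fst
        (by obtain ⟨r, hr⟩ := hne; exact ⟨r, by simpa using hr⟩)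
      exact ⟨r, by simpa using hr, fun r' hr' => h r' (by simpa using hr')⟩
    obtain ⟨L1, rfl⟩ := Multiset.exists_cons_of_mem hw
    have hwP : IsPolyMap (d + 1) w := hL (d, w) hw
    have hVP : ∀ v ∈ V, ∀ r ∈ ((d, w) ::ₘ L1), IsPolyMap r.1 (fun y => v y - r.2 y) →
        IsPolyMap (r.1 + 1) v := by
      intro v hv r hr h
      have := h.succ.add (hL r hr)
      simpa using this
    refine focus_step hfin ?_ w ?_
    · intro v hv
      rcases hcov v hv with rfl | ⟨r, hr, h⟩
      · rfl
      · exact (hVP v hv r hr h).at_zero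
    · intro Γ hΓ
      set V' : Set (M → ℤ) :=
        {q | ∃ v ∈ V, v ≠ 0 ∧ ∃ h ∈ Γ, q = fun y => v (y + h) - v h - w y} with hV'
      have hV'fin : V'.Finite := by
        refine ((hfin.prod hΓ).image fun q => fun y => q.1 (y + q.2) - q.1 q.2 - w y).subset ?_
        rintro q ⟨v, hv, -, h, hh, rfl⟩
        exact ⟨(v, h), ⟨hv, hh⟩, rfl⟩
      -- the low-degree elements
      let Vlow : Set (M → ℤ) := {q | q ∈ V' ∧ IsPolyMap d q}
      have hlow : Vlow.Finite := hV'fin.subset fun q hq => hq.1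
      let t : Multiset (ℕ × (M → ℤ)) :=
        if d = 0 then 0 else hlow.toFinset.val.map fun q => (d - 1, q)
      let L' := L1.map (fun r => (r.1, fun y => r.2 y - w y)) + t
      refine ih (L'.map Prod.fst) ?_ L' rfl ?_ V' hV'fin ?_
      · refine ⟨t.map Prod.fst, d, ?_, ?_⟩
        · intro a ha
          by_cases hd : d = 0
          · simp [t, hd] at ha
          · simp only [t, hd, if_false, Multiset.map_map, Function.comp, Multiset.mem_map] at ha
            obtain ⟨q, -, rfl⟩ := ha
            omega
        · rw [← hLW]
          simp only [L', Multiset.map_add, Multiset.map_map, Function.comp_def, Multiset.map_cons]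
          rw [← Multiset.singleton_add]
          abel
      · intro r hr
        rcases Multiset.mem_add.1 hr with hr | hr
        · obtain ⟨r', hr', rfl⟩ := Multiset.mem_map.1 hr
          have hr'' : r' ∈ (d, w) ::ₘ L1 := Multiset.mem_cons_of_mem hr'
          exact (hL r' hr'').sub (hwP.mono (Nat.succ_le_succ (hmin r' hr'')))
        · by_cases hd : d = 0
          · simp [t, hd] at hr
          · simp only [t, hd, if_false, Multiset.mem_map] at hr
            obtain ⟨q, hq, rfl⟩ := hr
            have hq' : q ∈ Vlow := by simpa using hq
            have : d - 1 + 1 = d := by omega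
            simpa [this] using hq'.2
      · intro q hq
        obtain ⟨v, hv, hv0, h, hh, rfl⟩ := hq
        obtain ⟨r, hr, hvr⟩ := (hcov v hv).resolve_left hv0
        have hvP := hVP v hv r hr hvr
        have hD := hvr.add (hvP.2 h)
        rcases Multiset.mem_cons.1 hr with rfl | hr1
        · have hq : IsPolyMap d (fun y => v (y + h) - v h - w y) := by
            convert hD using 2
            ring
          by_cases hd : d = 0
          · left
            subst hd
            exact hq
          · right
            refine ⟨(d - 1, fun y => v (y + h) - v h - w y), ?_, ?_⟩
            · refine Multiset.mem_add.2 (Or.inr ?_)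
              simp only [t, hd, if_false, Multiset.mem_map]
              refine ⟨_, ?_, rfl⟩
              have : (fun y => v (y + h) - v h - w y) ∈ Vlow := ⟨⟨v, hv, hv0, h, hh, rfl⟩, hq⟩
              simpa using this
            · simpa using! IsPolyMap.zero (M := M) (d - 1)
        · right
          refine ⟨(r.1, fun y => r.2 y - w y), Multiset.mem_add.2 (Or.inl ?_), ?_⟩
          · exact Multiset.mem_map.2 ⟨r, hr1, rfl⟩
          · convert hD using 2
            ring

lemma monoFam_of_poly (x : ℕ → M) (V : Set (M → ℤ)) (hfin : V.Finite)
    (hV : ∀ v ∈ V, ∃ d, IsPolyMap d v) : MonoFam x V := by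
  classical
  choose! d hd using hV
  refine monoFam_of_cover x _ (hfin.toFinset.val.map fun v => (d v, v)) rfl ?_ V hfin ?_
  · intro r hr
    obtain ⟨v, hv, rfl⟩ := Multiset.mem_map.1 hr
    exact (hd v (by simpa using hv)).succ
  · intro v hv
    right
    refine ⟨(d v, v), Multiset.mem_map.2 ⟨v, by simpa using hv, rfl⟩, ?_⟩
    simpa using! IsPolyMap.zero (M := M) (d v)

end PET

/-- Polynomial version of J-sets. -/
def PolyJ (A : Set ℕ) : Prop :=
  ∀ (F : Finset (ℕ → ℕ)) (T : Finset (ℕ → ℕ)), (∀ P ∈ T, IsPolyZeroConst P) → ∀ N : ℕ,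
    ∃ (a : ℕ) (β : Finset ℕ), β.Nonempty ∧ (∀ t ∈ β, N ≤ t) ∧
      ∀ f ∈ F, ∀ P ∈ T, a + P (∑ t ∈ β, f t) ∈ A

lemma exists_limit_coloring {κ : Type} [Finite κ] (c : ℕ → κ) :
    ∃ d : ℤ → κ, ∀ Z : Finset ℤ, ∃ n : ℕ, ∀ z ∈ Z, 0 ≤ n + z ∧ c (n + z).toNat = d z := by
  let U : Ultrafilter ℕ := Filter.hyperfilter ℕ
  have h : ∀ z : ℤ, ∃ k, ∀ᶠ n : ℕ in (U : Filter ℕ), c ((n : ℤ) + z).toNat = k := by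
    intro z
    have h1 : ∀ᶠ n : ℕ in (U : Filter ℕ), ∃ k ∈ (Set.univ : Set κ), c ((n : ℤ) + z).toNat = k :=
      Filter.Eventually.of_forall fun n => ⟨_, trivial, rfl⟩
    have h2 := (Ultrafilter.eventually_exists_mem_iff (f := U) (Set.toFinite (Set.univ : Set κ))
      (P := fun k n => c ((n : ℤ) + z).toNat = k)).1 h1
    obtain ⟨k, -, hk⟩ := h2
    exact ⟨k, hk⟩
  choose d hd using h
  refine ⟨d, fun Z => ?_⟩
  have h3 : ∀ z : ℤ, ∀ᶠ n : ℕ in (U : Filter ℕ), 0 ≤ (n : ℤ) + z := by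
    intro z
    have : ∀ᶠ n : ℕ in Filter.atTop, 0 ≤ (n : ℤ) + z := by
      filter_upwards [Filter.eventually_ge_atTop (-z).toNat] with n hn
      omega
    exact this.filter_mono (by rw [← Nat.cofinite_eq_atTop]; exact Filter.hyperfilter_le_cofinite)
  have h4 : ∀ᶠ n : ℕ in (U : Filter ℕ), ∀ z ∈ Z, 0 ≤ (n : ℤ) + z ∧ c ((n : ℤ) + z).toNat = d z :=
    (Filter.eventually_all_finset Z).2 fun z _ => (h3 z).and (hd z)
  exact h4.exists

lemma exists_mono_nat {κ : Type} [Finite κ] (c : ℕ → κ) (F T : Finset (ℕ → ℕ))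
    (hT : ∀ P ∈ T, IsPolyZeroConst P) (N : ℕ) :
    ∃ (a : ℕ) (β : Finset ℕ) (k : κ), β.Nonempty ∧ (∀ t ∈ β, N ≤ t) ∧
      ∀ f ∈ F, ∀ P ∈ T, c (a + P (∑ t ∈ β, f t)) = k := by
  classical
  obtain ⟨d, hd⟩ := exists_limit_coloring c
  choose! Q hQ0 hQ using hT
  let M := (ℕ → ℕ) → ℤ
  let x : ℕ → M := fun t f => (f t : ℤ)
  let ev : (ℕ → ℕ) → M →+ ℤ := fun f => Pi.evalAddMonoidHom (fun _ => ℤ) f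
  let g : (ℕ → ℕ) × (ℕ → ℕ) → M → ℤ := fun q y =>
    ((Q q.2).map (Nat.castRingHom ℤ)).eval (ev q.1 y)
  let V : Set (M → ℤ) := g '' ((F ×ˢ T : Finset _) : Set ((ℕ → ℕ) × (ℕ → ℕ)))
  have hV : MonoFam x V := by
    refine monoFam_of_poly x V ((Finset.finite_toSet _).image _) ?_
    rintro _ ⟨⟨f, P⟩, hfP, rfl⟩
    simp only [Finset.coe_product, Set.mem_prod, Finset.mem_coe] at hfP
    exact IsPolyMap.eval (ev f) (Q P) (hQ0 P hfP.2)
  obtain ⟨a, β, k, h1, h2, h3⟩ := hV κ d N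
  have key : ∀ f ∈ F, ∀ P ∈ T, g (f, P) (∑ t ∈ β, x t) = (P (∑ t ∈ β, f t) : ℕ) := by
    intro f hf P hP
    have e : ev f (∑ t ∈ β, x t) = ((∑ t ∈ β, f t : ℕ) : ℤ) := by
      simp only [map_sum, Nat.cast_sum]
      rfl
    simp only [g, e]
    rw [hQ P hP]
    exact Polynomial.eval_natCast_map _ _ _
  obtain ⟨n, hn⟩ := hd (insert a ((F ×ˢ T).image fun q => a + g q (∑ t ∈ β, x t)))
  have hna := (hn a (by simp)).1
  refine ⟨(n + a).toNat, β, k, h1, h2, fun f hf P hP => ?_⟩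
  have h4 := (hn (a + g (f, P) (∑ t ∈ β, x t)) (Finset.mem_insert_of_mem
    (Finset.mem_image.2 ⟨(f, P), by simp [hf, hP], rfl⟩))).2
  rw [h3 _ ⟨(f, P), by simp [hf, hP], rfl⟩, key f hf P hP] at h4
  rw [← h4]
  congr 1
  omega

lemma exists_ultrafilter_polyJ : ∃ U : Ultrafilter ℕ, ∀ A ∈ U, PolyJ A := by
  classical
  by_contra hcon
  push Not at hcon
  choose A hAU hA using hcon
  obtain ⟨E, hE⟩ := isCompact_univ.elim_finite_subcover (fun U => {V : Ultrafilter ℕ | A U ∈ V})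
    (fun U => ultrafilter_isOpen_basic _) (fun U _ => Set.mem_iUnion.2 ⟨U, hAU U⟩)
  have hcov : ∀ n : ℕ, ∃ U : E, n ∈ A U := by
    intro n
    have := hE (Set.mem_univ (pure n : Ultrafilter ℕ))
    simp only [Set.mem_iUnion] at this
    obtain ⟨U, hU, h⟩ := this
    exact ⟨⟨U, hU⟩, h⟩
  choose c hc using hcov
  unfold PolyJ at hA
  push Not at hA
  choose F T hT N hbad using hA
  obtain ⟨a, β, k, h1, h2, h3⟩ := exists_mono_nat (κ := Fin E.card) (fun n => E.equivFin (c n))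
    (E.biUnion F) (E.biUnion T)
    (by
      intro P hP
      obtain ⟨U, hU, h⟩ := Finset.mem_biUnion.1 hP
      exact hT U P h) (E.sup N)
  set U := E.equivFin.symm k with hU
  obtain ⟨f, hf, P, hP, h⟩ := hbad U a β h1
    (fun t ht => (Finset.le_sup U.2).trans (h2 t ht))
  apply h
  have h4 := h3 f (Finset.mem_biUnion.2 ⟨U, U.2, hf⟩) P (Finset.mem_biUnion.2 ⟨U, U.2, hP⟩)
  have h5 : c (a + P (∑ t ∈ β, f t)) = U := by
    rw [hU, ← h4]; simp
  have h6 := hc (a + P (∑ t ∈ β, f t))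
  rwa [h5] at h6

lemma mem_uAdd {p q : Ultrafilter ℕ} {A : Set ℕ} :
    A ∈ uAdd p q ↔ {x | {y | x + y ∈ A} ∈ q} ∈ p := Iff.rfl

lemma uAdd_assoc (p q r : Ultrafilter ℕ) : uAdd (uAdd p q) r = uAdd p (uAdd q r) := by
  ext A
  simp only [mem_uAdd, Set.mem_ofPred_eq, add_assoc]

lemma continuous_uAdd (q : Ultrafilter ℕ) : Continuous fun p => uAdd p q :=
  ultrafilterBasis_is_basis.continuous_iff.2 <| Set.forall_mem_range.mpr fun s ↦
    ultrafilter_isOpen_basic {x | {y | x + y ∈ s} ∈ q}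

/-- Every member of a minimal idempotent is a polynomial J-set. -/
lemma IsMinimalIdempotent.polyJ {p : Ultrafilter ℕ} (hp : IsMinimalIdempotent p) :
    ∀ A ∈ p, PolyJ A := by
  classical
  let J : Set (Ultrafilter ℕ) := {U | ∀ A ∈ U, PolyJ A}
  have hJcl : IsClosed J := by
    have : J = ⋂ (A : Set ℕ) (_ : ¬ PolyJ A), {U : Ultrafilter ℕ | A ∈ U}ᶜ := by
      ext U
      simp only [J, Set.mem_ofPred_eq, Set.mem_iInter, Set.mem_compl_iff]
      exact ⟨fun h A hA hU => hA (h A hU), fun h A hU => by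
        by_contra hA
        exact h A hA hU⟩
    rw [this]
    exact isClosed_iInter fun A => isClosed_iInter fun _ =>
      (ultrafilter_isOpen_basic A).isClosed_compl
  have hJr : ∀ j ∈ J, ∀ q, uAdd j q ∈ J := by
    intro j hj q A hA F T hT N
    obtain ⟨a, β, h1, h2, h3⟩ := hj _ (mem_uAdd.1 hA) F T hT N
    have h4 : ∀ᶠ y in (q : Filter ℕ), ∀ f ∈ F, ∀ P ∈ T, a + P (∑ t ∈ β, f t) + y ∈ A :=
      (Filter.eventually_all_finset F).2 fun f hf =>
        (Filter.eventually_all_finset T).2 fun P hP => h3 f hf P hP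
    obtain ⟨y, hy⟩ := h4.exists
    refine ⟨a + y, β, h1, h2, fun f hf P hP => ?_⟩
    rw [add_right_comm]
    exact hy f hf P hP
  have hJl : ∀ j ∈ J, ∀ q, uAdd q j ∈ J := by
    intro j hj q A hA F T hT N
    obtain ⟨y, hy⟩ := q.nonempty_of_mem (mem_uAdd.1 hA)
    obtain ⟨a, β, h1, h2, h3⟩ := hj _ hy F T hT N
    refine ⟨y + a, β, h1, h2, fun f hf P hP => ?_⟩
    rw [add_assoc]
    exact h3 f hf P hP
  let inst : AddSemigroup (Ultrafilter ℕ) := { add := uAdd, add_assoc := uAdd_assoc }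
  obtain ⟨j0, hj0⟩ := exists_ultrafilter_polyJ
  obtain ⟨e, ⟨j, hj, rfl⟩, he⟩ := exists_idempotent_in_compact_add_subsemigroup
    (M := Ultrafilter ℕ) (fun r => continuous_uAdd r) ((fun j => uAdd j p) '' J)
    ⟨_, j0, hj0, rfl⟩ (hJcl.isCompact.image (continuous_uAdd p)) (by
      rintro _ ⟨j, hj, rfl⟩ _ ⟨j', hj', rfl⟩
      refine ⟨uAdd (uAdd j p) j', hJr _ (hJr _ hj _) _, ?_⟩
      exact uAdd_assoc _ _ _)
  have he' : uAdd (uAdd j p) (uAdd j p) = uAdd j p := he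
  set e := uAdd j p with hee
  have heJ : e ∈ J := hJr _ hj _
  have hpp : uAdd p p = p := hp.1
  have hep : uAdd e p = e := by rw [hee, uAdd_assoc, hpp]
  have hq : uAdd p e = p := by
    apply hp.2
    · change uAdd (uAdd p e) (uAdd p e) = uAdd p e
      rw [uAdd_assoc, ← uAdd_assoc e p e, hep, he']
    · rw [uAdd_assoc, hep]
    · rw [← uAdd_assoc, hpp]
  have := hJl _ heJ p
  rw [hq] at this
  exact this

/-- `B⋆`. -/
def star (p : Ultrafilter ℕ) (B : Set ℕ) : Set ℕ := {x | x ∈ B ∧ {y | x + y ∈ B} ∈ p}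

lemma star_mem {p : Ultrafilter ℕ} (hp : IdempotentUF p) {B : Set ℕ} (hB : B ∈ p) :
    star p B ∈ p := by
  have h : B ∈ uAdd p p := by rw [show uAdd p p = p from hp]; exact hB
  exact Filter.inter_mem hB (mem_uAdd.1 h)

lemma star_shift {p : Ultrafilter ℕ} (hp : IdempotentUF p) {B : Set ℕ} {x : ℕ}
    (hx : x ∈ star p B) : {y | x + y ∈ star p B} ∈ p := by
  have h := star_mem hp hx.2
  refine Filter.mem_of_superset h ?_
  rintro y ⟨h1, h2⟩
  refine ⟨h1, ?_⟩
  simpa [add_assoc] using h2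

lemma tensor_tree (p : Ultrafilter ℕ) : ∀ (m : ℕ) (A : Set (Fin m → ℕ)),
    A ∈ tensor m (fun _ => p) → ∃ D : List ℕ → Set ℕ, (∀ l, D l ∈ p) ∧
      ∀ v : Fin m → ℕ, (∀ i : Fin m, v i ∈ D ((List.ofFn v).take i)) → v ∈ A := by
  classical
  intro m
  induction m with
  | zero =>
    intro A hA
    refine ⟨fun _ => Set.univ, fun _ => Filter.univ_mem, fun v _ => ?_⟩
    have h : (fun i : Fin 0 => (i.elim0 : ℕ)) ∈ A := hA
    convert h
  | succ m ih =>
    intro A hA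
    let A0 : Set ℕ := {x | {w : Fin m → ℕ | (Fin.cons x w : Fin (m + 1) → ℕ) ∈ A} ∈
      tensor m fun _ => p}
    have hA0 : A0 ∈ p := hA
    have h1 : ∀ x, ∃ D : List ℕ → Set ℕ, (∀ l, D l ∈ p) ∧ (x ∈ A0 →
        ∀ v : Fin m → ℕ, (∀ i : Fin m, v i ∈ D ((List.ofFn v).take i)) →
          (Fin.cons x v : Fin (m + 1) → ℕ) ∈ A) := by
      intro x
      by_cases hx : x ∈ A0
      · obtain ⟨D, hD1, hD2⟩ := ih _ hx
        exact ⟨D, hD1, fun _ => hD2⟩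
      · exact ⟨fun _ => Set.univ, fun _ => Filter.univ_mem, fun h => absurd h hx⟩
    choose D hD1 hD2 using h1
    refine ⟨fun l => match l with
      | [] => A0
      | x :: l => D x l, ?_, ?_⟩
    · intro l
      cases l with
      | nil => exact hA0
      | cons x l => exact hD1 x l
    · intro v hv
      have h0 : v 0 ∈ A0 := by simpa using hv 0
      have := hD2 (v 0) h0 (fun i => v i.succ) (fun i => by
        have := hv i.succ
        simpa [List.ofFn_succ] using this)
      have e : (Fin.cons (v 0) (fun i => v i.succ) : Fin (m + 1) → ℕ) = v :=
        Fin.cons_self_tail v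
      rwa [e] at this

lemma IsPolyZeroConst.shift {P : ℕ → ℕ} (hP : IsPolyZeroConst P) (x : ℕ) :
    ∃ Q : ℕ → ℕ, IsPolyZeroConst Q ∧ ∀ z, P (x + z) = P x + Q z := by
  obtain ⟨R, hR0, hR⟩ := hP
  let S := R.comp (Polynomial.C x + Polynomial.X)
  refine ⟨fun z => (Polynomial.X * S.divX).eval z, ⟨_, by simp, fun _ => rfl⟩, fun z => ?_⟩
  have h1 : P (x + z) = S.eval z := by simp [hR, S]
  have h2 : P x = S.coeff 0 := by
    rw [Polynomial.coeff_zero_eq_eval_zero]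
    simp [hR, S]
  rw [h1, h2]
  conv_lhs => rw [← Polynomial.X_mul_divX_add S]
  simp [add_comm]

/-- States: completed block values, and the current block `(s, x, P)`. -/
structure BState where
  l : List ℕ
  s : ℕ
  x : ℕ
  P : ℕ → ℕ

/-- The value of the current block. -/
def BState.val (σ : BState) : ℕ := σ.s + σ.P σ.x

/-- Data attached to a finite set of functions. -/
structure BData where
  a : ℕ
  H : Finset ℕ
  St : Set BState

/-- Invariant. -/
def BData.OK (p : Ultrafilter ℕ) (D : List ℕ → Set ℕ) (T : Finset (ℕ → ℕ)) (d : BData) : Prop :=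
  d.H.Nonempty ∧ d.St.Finite ∧ ∀ σ ∈ d.St, σ.P ∈ T ∧ σ.val ∈ star p (D σ.l)

/-- The data `d` correctly extends the data `prev` of a predecessor. -/
def BData.Ext (T : Finset (ℕ → ℕ)) (G : Finset (ℕ → ℕ)) (prev d : BData) : Prop :=
  (∀ x ∈ prev.H, ∀ y ∈ d.H, x < y) ∧ ∀ f ∈ G, ∀ σ ∈ prev.St,
    (⟨σ.l, σ.s + d.a, σ.x + ∑ t ∈ d.H, f t, σ.P⟩ : BState) ∈ d.St ∧
    ∀ P ∈ T, (⟨σ.l ++ [σ.val], d.a, ∑ t ∈ d.H, f t, P⟩ : BState) ∈ d.St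

lemma bdata_step {p : Ultrafilter ℕ} (hp : IdempotentUF p) (hJ : ∀ A ∈ p, PolyJ A)
    {D : List ℕ → Set ℕ} (hD : ∀ l, D l ∈ p) {T : Finset (ℕ → ℕ)}
    (hT : ∀ P ∈ T, IsPolyZeroConst P) (G : Finset (ℕ → ℕ))
    (prev : ∀ F, F ⊂ G → {d : BData // d.OK p D T}) :
    ∃ d : {d : BData // d.OK p D T},
      (∀ f ∈ G, ∀ P ∈ T, (⟨[], d.1.a, ∑ t ∈ d.1.H, f t, P⟩ : BState) ∈ d.1.St) ∧
      ∀ F (hF : F ⊂ G), (prev F hF).1.Ext T G d.1 := by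
  classical
  let S : Set BState := ⋃ F : {F // F ∈ G.ssubsets},
    (prev F.1 (Finset.mem_ssubsets.1 F.2)).1.St
  have hSfin : S.Finite := Set.finite_iUnion fun F => (prev F.1 _).2.2.1
  have hS : ∀ σ ∈ S, σ.P ∈ T ∧ σ.val ∈ star p (D σ.l) := by
    intro σ hσ
    obtain ⟨F, hF⟩ := Set.mem_iUnion.1 hσ
    exact (prev F.1 _).2.2.2 σ hF
  have hprevS : ∀ F (hF : F ⊂ G), ∀ σ ∈ (prev F hF).1.St, σ ∈ S := by
    intro F hF σ hσ
    exact Set.mem_iUnion.2 ⟨⟨F, Finset.mem_ssubsets.2 hF⟩, hσ⟩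
  have hsh : ∀ σ ∈ S, ∃ Q : ℕ → ℕ, IsPolyZeroConst Q ∧ ∀ z, σ.P (σ.x + z) = σ.P σ.x + Q z :=
    fun σ hσ => (hT _ (hS σ hσ).1).shift σ.x
  choose! Q hQ1 hQ2 using hsh
  let T' : Finset (ℕ → ℕ) := T ∪ (hSfin.image Q).toFinset
  have hT' : ∀ P ∈ T', IsPolyZeroConst P := by
    intro P hP
    rcases Finset.mem_union.1 hP with h | h
    · exact hT P h
    · obtain ⟨σ, hσ, rfl⟩ : P ∈ Q '' S := by simpa using h
      exact hQ1 σ hσ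
  let B : Set ℕ := star p (D []) ∩ ⋂ σ ∈ S,
    ({y | σ.val + y ∈ star p (D σ.l)} ∩ star p (D (σ.l ++ [σ.val])))
  have hB : B ∈ p := by
    refine Filter.inter_mem (star_mem hp (hD _)) ((Filter.biInter_mem hSfin).2 fun σ hσ => ?_)
    exact Filter.inter_mem (star_shift hp (hS σ hσ).2) (star_mem hp (hD _))
  let N : ℕ := (Finset.univ : Finset {F // F ∈ G.ssubsets}).sup fun F =>
    (prev F.1 (Finset.mem_ssubsets.1 F.2)).1.H.sup id + 1
  obtain ⟨a, β, h1, h2, h3⟩ := hJ B hB G T' hT' N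
  let St : Set BState :=
    ((fun q : (ℕ → ℕ) × (ℕ → ℕ) => (⟨[], a, ∑ t ∈ β, q.1 t, q.2⟩ : BState)) ''
        ((G : Set (ℕ → ℕ)) ×ˢ (T : Set (ℕ → ℕ)))) ∪
    ((fun q : (ℕ → ℕ) × BState =>
        (⟨q.2.l, q.2.s + a, q.2.x + ∑ t ∈ β, q.1 t, q.2.P⟩ : BState)) ''
        ((G : Set (ℕ → ℕ)) ×ˢ S)) ∪
    ((fun q : (ℕ → ℕ) × BState × (ℕ → ℕ) =>
        (⟨q.2.1.l ++ [q.2.1.val], a, ∑ t ∈ β, q.1 t, q.2.2⟩ : BState)) ''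
        ((G : Set (ℕ → ℕ)) ×ˢ S ×ˢ (T : Set (ℕ → ℕ))))
  have hGf := G.finite_toSet
  have hTf := T.finite_toSet
  refine ⟨⟨⟨a, β, St⟩, h1, ?_, ?_⟩, ?_, ?_⟩
  · exact (((hGf.prod hTf).image _).union ((hGf.prod hSfin).image _)).union
      ((hGf.prod (hSfin.prod hTf)).image _)
  · rintro σ' ((⟨⟨f, P⟩, ⟨hf, hP⟩, rfl⟩ | ⟨⟨f, σ⟩, ⟨hf, hσ⟩, rfl⟩) |
      ⟨⟨f, σ, P⟩, ⟨hf, hσ, hP⟩, rfl⟩)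
    · exact ⟨hP, (h3 f hf P (Finset.mem_union_left _ hP)).1⟩
    · refine ⟨(hS σ hσ).1, ?_⟩
      have h4 := (Set.mem_iInter₂.1 (h3 f hf (Q σ) (Finset.mem_union_right _ (by
        simpa using ⟨σ, hσ, rfl⟩))).2 σ hσ).1
      have e : σ.s + a + σ.P (σ.x + ∑ t ∈ β, f t) = σ.val + (a + Q σ (∑ t ∈ β, f t)) := by
        rw [hQ2 σ hσ, BState.val]; ring
      change σ.s + a + σ.P (σ.x + ∑ t ∈ β, f t) ∈ star p (D σ.l)
      rw [e]
      exact h4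
    · exact ⟨hP, (Set.mem_iInter₂.1 (h3 f hf P (Finset.mem_union_left _ hP)).2 σ hσ).2⟩
  · intro f hf P hP
    exact Or.inl (Or.inl ⟨(f, P), ⟨hf, hP⟩, rfl⟩)
  · intro F hF
    refine ⟨fun x hx y hy => ?_, fun f hf σ hσ => ⟨?_, fun P hP => ?_⟩⟩
    · have h5 := h2 y hy
      have h6 : (prev F hF).1.H.sup id + 1 ≤ N :=
        Finset.le_sup (f := fun F : {F // F ∈ G.ssubsets} =>
          (prev F.1 (Finset.mem_ssubsets.1 F.2)).1.H.sup id + 1)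
          (Finset.mem_univ ⟨F, Finset.mem_ssubsets.2 hF⟩)
      have h7 : x ≤ (prev F hF).1.H.sup id := Finset.le_sup (f := id) hx
      omega
    · exact Or.inl (Or.inr ⟨(f, σ), ⟨hf, hprevS F hF σ hσ⟩, rfl⟩)
    · exact Or.inr ⟨(f, σ, P), ⟨hf, hprevS F hF σ hσ, hP⟩, rfl⟩

lemma exists_bdata {p : Ultrafilter ℕ} (hp : IdempotentUF p) (hJ : ∀ A ∈ p, PolyJ A)
    {D : List ℕ → Set ℕ} (hD : ∀ l, D l ∈ p) {T : Finset (ℕ → ℕ)}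
    (hT : ∀ P ∈ T, IsPolyZeroConst P) :
    ∃ Φ : Finset (ℕ → ℕ) → BData, (∀ G, (Φ G).OK p D T) ∧
      (∀ G, ∀ f ∈ G, ∀ P ∈ T, (⟨[], (Φ G).a, ∑ t ∈ (Φ G).H, f t, P⟩ : BState) ∈ (Φ G).St) ∧
      ∀ F G, F ⊂ G → (Φ F).Ext T G (Φ G) := by
  choose step hstep1 hstep2 using fun G prev => bdata_step hp hJ hD hT G prev
  let Φ : Finset (ℕ → ℕ) → {d : BData // d.OK p D T} := Finset.strongInduction step
  have hΦ : ∀ G, Φ G = step G fun F _ => Φ F := fun G => Finset.strongInduction_eq step G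
  refine ⟨fun G => (Φ G).1, fun G => (Φ G).2, ?_, ?_⟩
  · intro G
    have := hstep1 G fun F _ => Φ F
    rwa [← hΦ] at this
  · intro F G hF
    have := hstep2 G (fun F _ => Φ F) F hF
    rwa [← hΦ] at this

lemma block_state {T : Finset (ℕ → ℕ)} {Φ : Finset (ℕ → ℕ) → BData}
    (hext : ∀ F G, F ⊂ G → (Φ F).Ext T G (Φ G)) {n : ℕ} {G : Fin n → Finset (ℕ → ℕ)}
    (hG : ∀ i j, i < j → G i ⊂ G j) {f : Fin n → ℕ → ℕ} (hf : ∀ i, f i ∈ G i)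
    (l : List ℕ) (P : ℕ → ℕ) (b : Finset (Fin n))
    (hent : ∀ i ∈ b, (⟨l, (Φ (G i)).a, ∑ t ∈ (Φ (G i)).H, f i t, P⟩ : BState) ∈ (Φ (G i)).St)
    (hb : b.Nonempty) :
    ∃ k ∈ b, (⟨l, ∑ i ∈ b, (Φ (G i)).a, ∑ i ∈ b, ∑ t ∈ (Φ (G i)).H, f i t, P⟩ : BState)
      ∈ (Φ (G k)).St := by
  classical
  induction b using Finset.induction_on_max with
  | empty => simp at hb
  | insert j b hj ih =>
    have hjb : j ∉ b := fun h => lt_irrefl _ (hj j h)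
    rcases b.eq_empty_or_nonempty with rfl | hne
    · exact ⟨j, by simp, by simpa using hent j (by simp)⟩
    · obtain ⟨k, hk, h⟩ := ih (fun i hi => hent i (Finset.mem_insert_of_mem hi)) hne
      refine ⟨j, by simp, ?_⟩
      have := ((hext _ _ (hG k j (hj k hk))).2 (f j) (hf j) _ h).1
      rw [Finset.sum_insert hjb, Finset.sum_insert hjb, add_comm (Φ (G j)).a,
        add_comm (∑ t ∈ (Φ (G j)).H, f j t)]
      exact this

/-- Multidimensional Stronger Polynomial Central Sets Theorem I (finitary form). -/
theorem multidimensional_stronger_polynomial_CST_I (m : ℕ) (hm : 1 ≤ m)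
    (p : Ultrafilter ℕ) (hp : IsMinimalIdempotent p)
    (A : Set (Fin m → ℕ)) (hA : A ∈ tensor m fun _ => p)
    (T : Finset (ℕ → ℕ)) (hT : T.Nonempty) (hTP : ∀ P ∈ T, IsPolyZeroConst P) :
    ∃ (α : Finset (ℕ → ℕ) → ℕ) (H : Finset (ℕ → ℕ) → Finset ℕ),
      (∀ F : Finset (ℕ → ℕ), F.Nonempty → (H F).Nonempty) ∧
      (∀ F G : Finset (ℕ → ℕ), F.Nonempty → F ⊂ G →
        ∀ x ∈ H F, ∀ y ∈ H G, x < y) ∧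
      (∀ n : ℕ, m ≤ n → ∀ G : Fin n → Finset (ℕ → ℕ),
        (∀ i, (G i).Nonempty) → (∀ i j, i < j → G i ⊂ G j) →
        ∀ f : Fin n → ℕ → ℕ, (∀ i, f i ∈ G i) →
        ∀ β : Fin m → Finset (Fin n),
          (∀ l, (β l).Nonempty) →
          (∀ l l' : Fin m, l < l' → ∀ x ∈ β l, ∀ y ∈ β l', x < y) →
          ∀ P : Fin m → ℕ → ℕ, (∀ l, P l ∈ T) →
          (fun l => (∑ i ∈ β l, α (G i)) +
              P l (∑ i ∈ β l, ∑ t ∈ H (G i), f i t)) ∈ A) := by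
  classical
  obtain ⟨D, hD, hDA⟩ := tensor_tree p m A hA
  obtain ⟨Φ, hOK, hinit, hext⟩ := exists_bdata hp.1 hp.polyJ hD hTP
  refine ⟨fun G => (Φ G).a, fun G => (Φ G).H, fun F _ => (hOK F).1,
    fun F G _ hFG => (hext F G hFG).1, ?_⟩
  intro n _ G _ hG f hf β hβ hββ P hP
  apply hDA
  set v : Fin m → ℕ := fun l => (∑ i ∈ β l, (Φ (G i)).a) +
              P l (∑ i ∈ β l, ∑ t ∈ (Φ (G i)).H, f i t) with hv
  have key : ∀ j : ℕ, ∀ hj : j < m, ∃ k ∈ β ⟨j, hj⟩,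
      (⟨(List.ofFn v).take j, ∑ i ∈ β ⟨j, hj⟩, (Φ (G i)).a,
        ∑ i ∈ β ⟨j, hj⟩, ∑ t ∈ (Φ (G i)).H, f i t, P ⟨j, hj⟩⟩ : BState) ∈ (Φ (G k)).St := by
    intro j
    induction j with
    | zero =>
      intro hj
      refine block_state hext hG hf _ _ _ (fun i hi => ?_) (hβ _)
      simpa using hinit (G i) (f i) (hf i) _ (hP _)
    | succ j ih =>
      intro hj
      obtain ⟨k, hk, h⟩ := ih (by omega)
      refine block_state hext hG hf _ _ _ (fun i hi => ?_) (hβ _)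
      have hki : k < i := hββ ⟨j, by omega⟩ ⟨j + 1, hj⟩ (by simp [Fin.lt_def]) k hk i hi
      have := ((hext _ _ (hG k i hki)).2 (f i) (hf i) _ h).2 (P ⟨j + 1, hj⟩) (hP _)
      have e : (List.ofFn v).take (j + 1) = (List.ofFn v).take j ++ [v ⟨j, by omega⟩] := by
        rw [List.take_succ_eq_append_getElem (by simp; omega)]
        simp
      rw [e]
      exact this
  intro i
  obtain ⟨k, hk, h⟩ := key i i.2
  exact ((hOK (G k)).2.2 _ h).2.1

end MultiCST
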